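/- Let ω be a nondecreasing sequence of positive reals tending to +∞, let (n_k) be a sequence of distinct positive integers satisfying Condition A_ω, and let f satisfy the stated conditions with ‖f‖ > 0. Put S_N(x) = Σ_{k=1}^N f(n_k x). Then for every positive integer p, ∫₀¹ ( S_N(x)/(‖f‖√N) )^p dx converges as N → ∞ to the p-th moment of the standard normal distribution, i.e. to p!/((p/2)! 2^{p/2}) if p is even and to 0 if p is odd. -/

import Mathlib

/-!
Condition `A_ω` makes the functions `x ↦ f (n k * x)` behave, as far as finitely many moments can
tell, like independent random variables, once a few indices are dropped and `f` is smoothed.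

* The indices whose element is among the `⌊N^(1/4)⌋` smallest ones contribute `O(N^(1/4))` to the
  sum, which is negligible against `√N`. Among the remaining (good) indices, Condition `A_ω` at
  the level `⌊N^(1/4)⌋` forbids every nontrivial linear relation with at most `q` terms and
  coefficients of polynomial size in `N` (`noRelation_goodSet`, `eventually_le_cut_rpow`).
* Convolving `f` with the normalised kernel `cos (π t) ^ (2 D)` gives a trigonometric polynomial
  `g` of degree `D`, with mean zero and the same sup bound as `f`. Since `f` has bounded variation,
  the `L¹` error is `O(D^(-1/2))` (`integral_abs_smooth_sub_le`); the choice `D = N^(2q+2)` makes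
  the replacement of `f` by `g` harmless in the `q`-th moment.
* In the absence of relations, the first `q` moments of `∑ k ∈ A, g (n k * x)` agree exactly with
  those of a sum of `#A` independent copies of `g`: the `q`-th moment is `q!` times the coefficient
  of `X^q` in the `#A`-th power of the moment series of `g` (`integral_sum_pow`).
* For power series `φ = 1 + 0 X + (σ/2) X² + ⋯`, the coefficient of `X^q` in `φ^m`, divided by
  `m^(q/2)`, tends to that of `exp (σ X² / 2)` (`tendsto_coeff_pow`), by the recursion that comes
  from differentiating `φ^m`.

Restoring the dropped indices changes the normalised sum by `o(1)` uniformly, hence the `p`-th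
moment by `o(1)`, because the `2p`-th moments of the good part are bounded.
-/

open MeasureTheory Filter Real Topology

noncomputable section

/-- `n k` is among the `N` smallest elements of the sequence `n`. -/
def AmongSmallest (n : ℕ → ℕ) (N : ℕ) (k : ℕ) : Prop :=
  {j : ℕ | n j ≤ n k}.ncard ≤ N

/-- Condition `A_ω` with explicit threshold `N₀`. -/
def CondAWith (ω : ℕ → ℝ) (n : ℕ → ℕ) (N₀ : ℕ) : Prop :=
  ∀ N : ℕ, N₀ ≤ N →
    ∀ (r : ℕ) (k : Fin r → ℕ) (a : Fin r → ℤ),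
      2 ≤ r → (r : ℝ) ≤ ω N →
      Function.Injective k →
      (∀ i, a i ≠ 0) →
      (∀ i, (|a i| : ℝ) ≤ (N : ℝ) ^ ω N) →
      (∑ i, a i * (n (k i) : ℤ)) = 0 →
      ∀ i, AmongSmallest n N (k i)

/-- Condition `A_ω`. -/
def CondA (ω : ℕ → ℝ) (n : ℕ → ℕ) : Prop := ∃ N₀, CondAWith ω n N₀

/-! ### Coefficients of large powers of a power series -/

/-- The `q`-th moment of the centred normal law of variance `s`, divided by `q!`. -/
def gaussCoeff (s : ℝ) (q : ℕ) : ℝ :=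
  if Even q then s ^ (q / 2) / ((q / 2).factorial * 2 ^ (q / 2)) else 0

lemma gaussCoeff_add_two (s : ℝ) (q : ℕ) :
    gaussCoeff s (q + 2) = gaussCoeff s q * s / (q + 2) := by
  unfold gaussCoeff
  by_cases h : Even q
  · have h' : Even (q + 2) := by grind
    obtain ⟨r, rfl⟩ := h
    have e1 : (r + r) / 2 = r := by omega
    have e2 : (r + r + 2) / 2 = r + 1 := by omega
    rw [if_pos h', if_pos ⟨r, rfl⟩, e1, e2, Nat.factorial_succ]
    have := Nat.factorial_pos r
    push_cast
    field_simp
    ring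
  · have h' : ¬ Even (q + 2) := by grind
    simp [h, h']

/-- Central limit theorem at the level of moment generating series: if `φ N` has the shape
`1 + 0·X + (s/2 + o(1)) X² + O(1) X³ + …`, then the coefficients of `φ N ^ c N` with `c N ∼ N`,
rescaled by powers of `√N`, converge to those of `exp (s X² / 2)`. Differentiating
`φ ^ c` expresses the coefficient of degree `q + 1` through those of `φ ^ (c - 1)` of degree at
most `q`. -/
lemma tendsto_coeff_pow (φ : ℕ → PowerSeries ℝ) (s : ℝ)
    (h0 : ∀ N, PowerSeries.coeff 0 (φ N) = 1)
    (h1 : ∀ N, PowerSeries.coeff 1 (φ N) = 0)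
    (h2 : Tendsto (fun N => PowerSeries.coeff 2 (φ N)) atTop (𝓝 (s / 2)))
    (hb : ∀ i, ∃ C, ∀ N, |PowerSeries.coeff i (φ N)| ≤ C) :
    ∀ (q : ℕ) (c : ℕ → ℕ), Tendsto (fun N : ℕ => (c N : ℝ) / N) atTop (𝓝 1) →
      Tendsto (fun N : ℕ => PowerSeries.coeff q (φ N ^ c N) / √(N : ℝ) ^ q) atTop
        (𝓝 (gaussCoeff s q)) := by
  have hsq : Tendsto (fun N : ℕ => √(N : ℝ)) atTop atTop :=
    Real.tendsto_sqrt_atTop.comp tendsto_natCast_atTop_atTop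
  have hw : ∀ j : ℕ, Tendsto
      (fun N : ℕ => PowerSeries.coeff (j + 1) (φ N) * (j + 1) * √(N : ℝ) / √(N : ℝ) ^ j) atTop
      (𝓝 (if j = 1 then s else 0)) := by
    intro j
    rcases j with _ | _ | j
    · simp [h1]
    · have : Tendsto (fun N : ℕ => PowerSeries.coeff 2 (φ N) * 2) atTop (𝓝 s) := by
        simpa using h2.mul_const 2
      refine (this.congr' ?_)
      filter_upwards [eventually_gt_atTop 0] with N hN
      have : 0 < √(N : ℝ) := Real.sqrt_pos.2 (by exact_mod_cast hN)
      field_simp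
      norm_num
    · obtain ⟨C, hC⟩ := hb (j + 1 + 1 + 1)
      have hz : Tendsto (fun N : ℕ => C * ((j + 1 + 1 : ℕ) + 1) * (√(N : ℝ) ^ (j + 1))⁻¹) atTop
          (𝓝 0) := by
        have := (tendsto_inv_atTop_zero.comp
          ((tendsto_pow_atTop (α := ℝ) (Nat.succ_ne_zero j)).comp hsq))
        simpa using this.const_mul (C * ((j + 1 + 1 : ℕ) + 1))
      rw [if_neg (by omega)]
      refine squeeze_zero_norm' ?_ hz
      filter_upwards [eventually_gt_atTop 0] with N hN
      have hp : 0 < √(N : ℝ) := Real.sqrt_pos.2 (by exact_mod_cast hN)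
      have : PowerSeries.coeff (j + 1 + 1 + 1) (φ N) * ((j + 1 + 1 : ℕ) + 1) * √(N : ℝ) /
          √(N : ℝ) ^ (j + 1 + 1) = PowerSeries.coeff (j + 1 + 1 + 1) (φ N) *
          (((j + 1 + 1 : ℕ) + 1) * (√(N : ℝ) ^ (j + 1))⁻¹) := by
        field_simp
        ring
      rw [this, norm_mul, Real.norm_eq_abs, Real.norm_eq_abs, mul_assoc,
        abs_of_nonneg (a := _ * _) (by positivity)]
      exact mul_le_mul_of_nonneg_right (hC N) (by positivity)
  intro q
  induction q using Nat.strong_induction_on with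
  | _ q ih =>
  intro c hc
  rcases q with _ | q
  · have h00 : ∀ N, PowerSeries.coeff 0 (φ N ^ c N) = 1 := by
      intro N
      have := h0 N
      simp only [PowerSeries.coeff_zero_eq_constantCoeff] at this ⊢
      simp [this]
    simp [h00, gaussCoeff]
  · have hc' : Tendsto (fun N : ℕ => ((c N - 1 : ℕ) : ℝ) / N) atTop (𝓝 1) := by
      have hinv : Tendsto (fun N : ℕ => (N : ℝ)⁻¹) atTop (𝓝 0) :=
        tendsto_inv_atTop_zero.comp tendsto_natCast_atTop_atTop
      have h3 : Tendsto (fun N : ℕ => (c N : ℝ) / N - (N : ℝ)⁻¹) atTop (𝓝 1) := by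
        simpa using hc.sub hinv
      refine tendsto_of_tendsto_of_tendsto_of_le_of_le h3 hc ?_ ?_
      · intro N
        have : (c N : ℝ) - 1 ≤ ((c N - 1 : ℕ) : ℝ) := by
          have : c N ≤ (c N - 1) + 1 := by omega
          have : (c N : ℝ) ≤ ((c N - 1 : ℕ) : ℝ) + 1 := by exact_mod_cast this
          linarith
        calc (c N : ℝ) / N - (N : ℝ)⁻¹ = ((c N : ℝ) - 1) / N := by ring
          _ ≤ _ := div_le_div_of_nonneg_right this (by positivity)
      · intro N
        have : c N - 1 ≤ c N := by omega
        exact div_le_div_of_nonneg_right (Nat.cast_le.2 this) (by positivity)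
    have hsum : Tendsto (fun N : ℕ => ((q : ℝ) + 1)⁻¹ *
        ∑ ij ∈ Finset.HasAntidiagonal.antidiagonal q, (c N : ℝ) / N *
          (PowerSeries.coeff ij.1 (φ N ^ (c N - 1)) / √(N : ℝ) ^ ij.1) *
          (PowerSeries.coeff (ij.2 + 1) (φ N) * (ij.2 + 1) * √(N : ℝ) / √(N : ℝ) ^ ij.2)) atTop
        (𝓝 (((q : ℝ) + 1)⁻¹ * ∑ ij ∈ Finset.HasAntidiagonal.antidiagonal q,
          1 * gaussCoeff s ij.1 * (if ij.2 = 1 then s else 0))) := by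
      refine Tendsto.const_mul _ (tendsto_finsetSum _ fun ij hij => ?_)
      have hlt : ij.1 < q + 1 := by
        have := Finset.HasAntidiagonal.mem_antidiagonal.1 hij
        omega
      exact (hc.mul (ih _ hlt _ hc')).mul (hw ij.2)
    have hlim : ((q : ℝ) + 1)⁻¹ * ∑ ij ∈ Finset.HasAntidiagonal.antidiagonal q,
          1 * gaussCoeff s ij.1 * (if ij.2 = 1 then s else 0) = gaussCoeff s (q + 1) := by
      rcases q with _ | q
      · simp [gaussCoeff]
      · rw [Finset.sum_eq_single (q, 1)]
        · rw [gaussCoeff_add_two]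
          push_cast
          simp
          field_simp
          ring
        · rintro ⟨i, j⟩ hij hne
          have := Finset.HasAntidiagonal.mem_antidiagonal.1 hij
          have : j ≠ 1 := by
            rintro rfl
            apply hne
            simp at this
            simp [this]
          simp [this]
        · intro h
          exact absurd (by simp) h
    rw [hlim] at hsum
    refine hsum.congr' ?_
    filter_upwards [eventually_gt_atTop 0] with N hN
    have hp : 0 < √(N : ℝ) := Real.sqrt_pos.2 (by exact_mod_cast hN)
    have hNN : (N : ℝ) = √(N : ℝ) * √(N : ℝ) := (Real.mul_self_sqrt (by positivity)).symm
    have key : PowerSeries.coeff (q + 1) (φ N ^ c N) * ((q : ℝ) + 1) =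
        ∑ ij ∈ Finset.HasAntidiagonal.antidiagonal q,
          (c N : ℝ) * (PowerSeries.coeff ij.1 (φ N ^ (c N - 1)) *
          (PowerSeries.coeff (ij.2 + 1) (φ N) * (ij.2 + 1))) := by
      rw [← PowerSeries.coeff_derivative, PowerSeries.derivative_pow, mul_assoc,
        ← Finset.mul_sum, ← nsmul_eq_mul, map_nsmul, nsmul_eq_mul, PowerSeries.coeff_mul]
      simp only [PowerSeries.coeff_derivative]
    have hq : (0 : ℝ) < q + 1 := by positivity
    rw [show PowerSeries.coeff (q + 1) (φ N ^ c N) / √(N : ℝ) ^ (q + 1) =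
      ((q : ℝ) + 1)⁻¹ * ((PowerSeries.coeff (q + 1) (φ N ^ c N) * ((q : ℝ) + 1)) /
        √(N : ℝ) ^ (q + 1)) by field_simp, key, Finset.sum_div]
    congr 1
    refine Finset.sum_congr rfl fun ij hij => ?_
    have hq' : q = ij.1 + ij.2 := (Finset.HasAntidiagonal.mem_antidiagonal.1 hij).symm
    rw [hq']
    generalize √(N : ℝ) = t at *
    rw [hNN]
    field_simp
    ring

/-! ### Trigonometric polynomials along a sequence without short relations -/

/-- The character `x ↦ exp (2πi m x)`. -/
def char (m : ℤ) (x : ℝ) : ℂ := Complex.exp (2 * π * Complex.I * m * x)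

lemma char_add (a b : ℤ) (x : ℝ) : char (a + b) x = char a x * char b x := by
  unfold char
  rw [← Complex.exp_add]
  push_cast
  ring_nf

lemma char_zero (x : ℝ) : char 0 x = 1 := by simp [char]

lemma char_comp_mul (m : ℤ) (k : ℕ) (x : ℝ) : char m (k * x) = char (m * k) x := by
  unfold char
  push_cast
  ring_nf

lemma continuous_char (m : ℤ) : Continuous (char m) := by
  unfold char
  fun_prop

lemma integral_char (m : ℤ) : ∫ x in (0 : ℝ)..1, char m x = if m = 0 then 1 else 0 := by
  split_ifs with h
  · subst h
    simp [char_zero]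
  · unfold char
    have hc : (2 * π * Complex.I * m : ℂ) ≠ 0 := by
      have : (π : ℂ) ≠ 0 := by exact_mod_cast Real.pi_ne_zero
      have : (m : ℂ) ≠ 0 := by exact_mod_cast h
      simp_all [Complex.I_ne_zero]
    rw [integral_exp_mul_complex hc, div_eq_zero_iff]
    have : Complex.exp (2 * π * Complex.I * m * (1 : ℝ)) = 1 := by
      rw [Complex.exp_eq_one_iff]
      exact ⟨m, by push_cast; ring⟩
    left
    rw [this]
    simp

/-- The integer `∑ k, ν k * n k` attached to a finitely supported coefficient vector `ν`. -/
def dot (n : ℕ → ℕ) : (ℕ →₀ ℤ) →ₗ[ℤ] ℤ := Finsupp.linearCombination ℤ (fun k => (n k : ℤ))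

/-- Coefficient vectors supported in `A`, with at most `r` nonzero entries, each at most `B` in
absolute value. -/
def coeffVecs (A : Finset ℕ) (r B : ℕ) : Set (ℕ →₀ ℤ) :=
  {ν | ν.support ⊆ A ∧ ν.support.card ≤ r ∧ ∀ k, |ν k| ≤ B}

/-- The elements `n k`, `k ∈ A`, satisfy no nontrivial linear relation with at most `r` terms and
coefficients bounded by `B`. -/
def NoRelation (n : ℕ → ℕ) (A : Finset ℕ) (r B : ℕ) : Prop :=
  ∀ ν ∈ coeffVecs A r B, dot n ν = 0 → ν = 0

/-- Trigonometric polynomials with frequencies `∑ k, ν k * n k`, for `ν ∈ coeffVecs A r B`. -/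
def trigSpan (n : ℕ → ℕ) (A : Finset ℕ) (r B : ℕ) : Submodule ℂ (ℝ → ℂ) :=
  Submodule.span ℂ (Set.image (fun ν => char (dot n ν)) (coeffVecs A r B))

lemma coeffVecs_mono {A A' : Finset ℕ} {r r' B B' : ℕ} (hA : A ⊆ A') (hr : r ≤ r') (hB : B ≤ B') :
    coeffVecs A r B ⊆ coeffVecs A' r' B' := fun _ h =>
  ⟨h.1.trans hA, h.2.1.trans hr, fun k => (h.2.2 k).trans (by exact_mod_cast hB)⟩

lemma NoRelation.mono {n : ℕ → ℕ} {A A' : Finset ℕ} {r r' B B' : ℕ} (h : NoRelation n A' r' B')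
    (hA : A ⊆ A') (hr : r ≤ r') (hB : B ≤ B') : NoRelation n A r B :=
  fun ν hν => h ν (coeffVecs_mono hA hr hB hν)

lemma coeffVecs_add {A A' : Finset ℕ} {r r' B B' : ℕ} {ν ν' : ℕ →₀ ℤ}
    (h : ν ∈ coeffVecs A r B) (h' : ν' ∈ coeffVecs A' r' B') :
    ν + ν' ∈ coeffVecs (A ∪ A') (r + r') (B + B') := by
  refine ⟨Finsupp.support_add.trans (Finset.union_subset_union h.1 h'.1), ?_, fun k => ?_⟩
  · exact ((Finset.card_le_card Finsupp.support_add).trans (Finset.card_union_le _ _)).trans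
      (add_le_add h.2.1 h'.2.1)
  · rw [Finsupp.add_apply]
    push_cast
    exact (abs_add_le _ _).trans (add_le_add (h.2.2 k) (h'.2.2 k))

lemma trigSpan_continuous {n : ℕ → ℕ} {A : Finset ℕ} {r B : ℕ} {F : ℝ → ℂ}
    (hF : F ∈ trigSpan n A r B) : Continuous F := by
  induction hF using Submodule.span_induction with
  | mem F h => obtain ⟨ν, -, rfl⟩ := h; exact continuous_char _
  | zero => exact continuous_const
  | add F G _ _ hF hG => exact hF.add hG
  | smul a F _ hF => exact hF.const_smul a

lemma trigSpan_mul {n : ℕ → ℕ} {A A' : Finset ℕ} {r r' B B' : ℕ} {F G : ℝ → ℂ}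
    (hF : F ∈ trigSpan n A r B) (hG : G ∈ trigSpan n A' r' B') :
    F * G ∈ trigSpan n (A ∪ A') (r + r') (B + B') := by
  induction hF, hG using Submodule.span_induction₂ with
  | mem_mem F G h h' =>
    obtain ⟨ν, hν, rfl⟩ := h
    obtain ⟨ν', hν', rfl⟩ := h'
    refine Submodule.subset_span ⟨ν + ν', coeffVecs_add hν hν', ?_⟩
    ext x
    simp [char_add]
  | zero_left => simp
  | zero_right => simp
  | add_left F G H _ _ _ h1 h2 => rw [add_mul]; exact add_mem h1 h2
  | add_right F G H _ _ _ h1 h2 => rw [mul_add]; exact add_mem h1 h2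
  | smul_left a F G _ _ h => rw [smul_mul_assoc]; exact Submodule.smul_mem _ _ h
  | smul_right a F G _ _ h => rw [mul_smul_comm]; exact Submodule.smul_mem _ _ h

lemma one_mem_trigSpan {n : ℕ → ℕ} {A : Finset ℕ} {r B : ℕ} : (1 : ℝ → ℂ) ∈ trigSpan n A r B := by
  refine Submodule.subset_span ⟨0, ⟨by simp, by simp, by simp⟩, ?_⟩
  ext x
  simp [char_zero]

lemma trigSpan_pow {n : ℕ → ℕ} {A : Finset ℕ} {B : ℕ} {F : ℝ → ℂ}
    (hF : F ∈ trigSpan n A 1 B) (i : ℕ) : F ^ i ∈ trigSpan n A i (i * B) := by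
  induction i with
  | zero => simpa using one_mem_trigSpan
  | succ i ih =>
    rw [pow_succ, add_mul, one_mul]
    simpa using trigSpan_mul ih hF

lemma trigSpan_mono {n : ℕ → ℕ} {A A' : Finset ℕ} {r B : ℕ} (hA : A ⊆ A') :
    trigSpan n A r B ≤ trigSpan n A' r B :=
  Submodule.span_mono (Set.image_mono (coeffVecs_mono hA le_rfl le_rfl))

/-- Trigonometric polynomials built on disjoint sets of indices are uncorrelated, as no frequency
of one cancels a frequency of the other except when both vanish. -/
lemma integral_mul_of_noRelation {n : ℕ → ℕ} {A A' : Finset ℕ} {r r' B B' : ℕ} {F G : ℝ → ℂ}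
    (hd : Disjoint A A') (hno : NoRelation n (A ∪ A') (r + r') (B + B'))
    (hF : F ∈ trigSpan n A r B) (hG : G ∈ trigSpan n A' r' B') :
    ∫ x in (0 : ℝ)..1, F x * G x = (∫ x in (0 : ℝ)..1, F x) * ∫ x in (0 : ℝ)..1, G x := by
  have hi : ∀ {F : ℝ → ℂ}, Continuous F → IntervalIntegrable F volume 0 1 :=
    fun h => h.intervalIntegrable _ _
  induction hF, hG using Submodule.span_induction₂ with
  | mem_mem F G h h' =>
    obtain ⟨ν, hν, rfl⟩ := h
    obtain ⟨ν', hν', rfl⟩ := h'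
    simp only [← char_add, ← map_add, integral_char]
    by_cases h0 : dot n (ν + ν') = 0
    · have hz := hno _ (coeffVecs_add hν hν') h0
      have hds : Disjoint ν.support ν'.support := Finset.disjoint_of_subset_left hν.1
        (Finset.disjoint_of_subset_right hν'.1 hd)
      have hsup := Finsupp.support_add_eq hds
      rw [hz, Finsupp.support_zero, eq_comm, Finset.union_eq_empty, Finsupp.support_eq_empty,
        Finsupp.support_eq_empty] at hsup
      simp [hsup.1, hsup.2]
    · have : ¬ (dot n ν = 0 ∧ dot n ν' = 0) := by
        rintro ⟨h1, h2⟩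
        exact h0 (by rw [map_add, h1, h2, add_zero])
      rw [if_neg h0]
      split_ifs <;> simp_all
  | zero_left => simp
  | zero_right => simp
  | add_left F G H hF hG hH h1 h2 =>
    have hF := trigSpan_continuous hF
    have hG := trigSpan_continuous hG
    have hH := trigSpan_continuous hH
    simp only [Pi.add_apply, add_mul]
    rw [intervalIntegral.integral_add (hi (hF.fun_mul hH)) (hi (hG.fun_mul hH)),
      intervalIntegral.integral_add (hi hF) (hi hG), h1, h2, add_mul]
  | add_right F G H hF hG hH h1 h2 =>
    have hF := trigSpan_continuous hF
    have hG := trigSpan_continuous hG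
    have hH := trigSpan_continuous hH
    simp only [Pi.add_apply, mul_add]
    rw [intervalIntegral.integral_add (hi (hF.fun_mul hG)) (hi (hF.fun_mul hH)),
      intervalIntegral.integral_add (hi hG) (hi hH), h1, h2, mul_add]
  | smul_left a F G _ _ h =>
    simp only [Pi.smul_apply, smul_eq_mul, mul_assoc]
    rw [intervalIntegral.integral_const_mul, intervalIntegral.integral_const_mul, h, mul_assoc]
  | smul_right a F G _ _ h =>
    simp only [Pi.smul_apply, smul_eq_mul, mul_left_comm _ a]
    rw [intervalIntegral.integral_const_mul, intervalIntegral.integral_const_mul, h,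
      mul_left_comm]

/-- `g` is a real trigonometric polynomial of degree at most `D`; the frequencies `-D, …, D` are
indexed as `m - D` with `m ≤ 2D`. -/
def IsTrigPoly (D : ℕ) (g : ℝ → ℝ) : Prop :=
  ∃ c : ℕ → ℂ, ∀ x, (g x : ℂ) = ∑ m ∈ Finset.range (2 * D + 1), c m * char ((m : ℤ) - D) x

lemma IsTrigPoly.mem_trigSpan {D : ℕ} {g : ℝ → ℝ} (hg : IsTrigPoly D g) (n : ℕ → ℕ) (a : ℕ) :
    (fun x : ℝ => ((g (n a * x) : ℝ) : ℂ)) ∈ trigSpan n {a} 1 D := by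
  obtain ⟨c, hc⟩ := hg
  have : (fun x : ℝ => ((g (n a * x) : ℝ) : ℂ)) =
      ∑ m ∈ Finset.range (2 * D + 1), c m • char (((m : ℤ) - D) * n a) := by
    ext x
    simp [hc, Finset.sum_apply, char_comp_mul]
  rw [this]
  refine Submodule.sum_mem _ fun m hm => Submodule.smul_mem _ _ (Submodule.subset_span
    ⟨Finsupp.single a ((m : ℤ) - D), ⟨Finsupp.support_single_subset, ?_, fun k => ?_⟩, ?_⟩)
  · exact (Finset.card_le_card Finsupp.support_single_subset).trans (by simp)
  · have := Finset.mem_range.1 hm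
    rw [Finsupp.single_apply]
    split_ifs
    · rw [abs_le]; omega
    · simp
  · simp [dot, Finsupp.linearCombination_single, sub_mul]

lemma IsTrigPoly.continuous {D : ℕ} {g : ℝ → ℝ} (hg : IsTrigPoly D g) : Continuous g := by
  have h := trigSpan_continuous (hg.mem_trigSpan (fun _ => 1) 0)
  have : g = fun x => (((g ((1 : ℕ) * x) : ℝ) : ℂ)).re := by
    ext x; simp
  rw [this]
  exact Complex.continuous_re.comp h

lemma IsTrigPoly.periodic {D : ℕ} {g : ℝ → ℝ} (hg : IsTrigPoly D g) : Function.Periodic g 1 := by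
  obtain ⟨c, hc⟩ := hg
  intro x
  have : ((g (x + 1) : ℝ) : ℂ) = (g x : ℂ) := by
    rw [hc, hc]
    refine Finset.sum_congr rfl fun m _ => ?_
    congr 1
    unfold char
    rw [Complex.exp_eq_exp_iff_exists_int]
    exact ⟨(m : ℤ) - D, by push_cast; ring⟩
  exact_mod_cast this

lemma integral_comp_nat_mul {h : ℝ → ℝ} (hp : Function.Periodic h 1)
    (hi : ∀ a b, IntervalIntegrable h volume a b) {k : ℕ} (hk : 0 < k) :
    ∫ x in (0 : ℝ)..1, h (k * x) = ∫ x in (0 : ℝ)..1, h x := by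
  have hk' : (k : ℝ) ≠ 0 := by positivity
  rw [intervalIntegral.integral_comp_mul_left _ hk']
  have := hp.intervalIntegral_add_zsmul_eq (k : ℤ) 0 hi
  simp at this
  simp [this]
  field_simp

/-- The exponential moment generating series `∑ i, (∫₀¹ g ^ i) X ^ i / i!`. -/
def momentSeries (g : ℝ → ℝ) : PowerSeries ℝ :=
  PowerSeries.mk fun i => (∫ x in (0 : ℝ)..1, g x ^ i) / i.factorial

/-- In the absence of short relations, the functions `g (n k * x)` have the joint moments of
independent variables distributed like `g`. -/
lemma integral_sum_pow {n : ℕ → ℕ} (hn : ∀ k, 0 < n k) {D : ℕ} {g : ℝ → ℝ} (hg : IsTrigPoly D g)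
    (Q : ℕ) (A : Finset ℕ) (hno : NoRelation n A Q (Q * D)) :
    ∀ q ≤ Q, ∫ x in (0 : ℝ)..1, (∑ k ∈ A, g (n k * x)) ^ q =
      q.factorial * PowerSeries.coeff q (momentSeries g ^ A.card) := by
  induction A using Finset.induction_on with
  | empty =>
    intro q _
    rcases q with _ | q <;> simp [PowerSeries.coeff_one]
  | insert a A ha ih =>
    intro q hq
    have ih' := ih (hno.mono (Finset.subset_insert _ _) le_rfl le_rfl)
    have hgc := hg.continuous
    have hsum : (fun x : ℝ => ((∑ k ∈ A, g (n k * x) : ℝ) : ℂ)) ∈ trigSpan n A 1 D := by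
      have : (fun x : ℝ => ((∑ k ∈ A, g (n k * x) : ℝ) : ℂ)) =
          ∑ k ∈ A, fun x : ℝ => ((g (n k * x) : ℝ) : ℂ) := by
        ext x; simp
      rw [this]
      exact Submodule.sum_mem _ fun k hk =>
        trigSpan_mono (by simpa using hk) (hg.mem_trigSpan n k)
    have hfac : ∀ i j, i + j = q → ∫ x in (0 : ℝ)..1,
        g (n a * x) ^ i * (∑ k ∈ A, g (n k * x)) ^ j =
        (∫ x in (0 : ℝ)..1, g x ^ i) * ∫ x in (0 : ℝ)..1, (∑ k ∈ A, g (n k * x)) ^ j := by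
      intro i j hij
      have h1 : ∫ x in (0 : ℝ)..1, g x ^ i = ∫ x in (0 : ℝ)..1, g (n a * x) ^ i := by
        refine (integral_comp_nat_mul (h := fun x => g x ^ i) (fun x => ?_) (fun b c => ?_)
          (hn a)).symm
        · simp [hg.periodic x]
        · exact (hgc.pow i).intervalIntegrable _ _
      have h2 := integral_mul_of_noRelation (n := n) (A := {a}) (A' := A) (by simpa using ha)
        (hno.mono (r := i + j) (B := i * D + j * D) ?_ ?_ ?_)
        (trigSpan_pow (hg.mem_trigSpan n a) i) (trigSpan_pow hsum j)
      · rw [h1]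
        simp only [Pi.pow_apply, ← Complex.ofReal_pow, ← Complex.ofReal_mul,
          intervalIntegral.integral_ofReal] at h2
        exact_mod_cast h2
      · intro k; simp
      · omega
      · rw [← add_mul, hij]
        gcongr
    simp only [Finset.sum_insert ha, Finset.card_insert_of_notMem ha]
    rw [pow_succ', PowerSeries.coeff_mul, Finset.mul_sum]
    simp only [fun x : ℝ => (Commute.all (g (n a * x)) (∑ k ∈ A, g (n k * x))).add_pow' q]
    rw [intervalIntegral.integral_finsetSum]
    · refine Finset.sum_congr rfl fun ij hij => ?_
      have hij := Finset.HasAntidiagonal.mem_antidiagonal.1 hij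
      simp only [nsmul_eq_mul]
      rw [intervalIntegral.integral_const_mul, hfac _ _ hij, ih' _ (by omega), momentSeries,
        PowerSeries.coeff_mk]
      have hch : ((q.choose ij.1 : ℕ) : ℝ) * ij.1.factorial * ij.2.factorial = q.factorial := by
        rw [← hij]
        exact_mod_cast Nat.choose_symm_add ▸ Nat.add_choose_mul_factorial_mul_factorial ij.1 ij.2
      rw [← hch]
      have : (ij.1.factorial : ℝ) ≠ 0 := by positivity
      field_simp
    · intro ij _
      refine Continuous.intervalIntegrable ?_ _ _
      fun_prop

/-! ### Approximation of a function of bounded variation -/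

lemma exists_bound_of_bv {f : ℝ → ℝ} (hf_per : ∀ x, f (x + 1) = f x)
    (hf_bv : BoundedVariationOn f (Set.Icc 0 1)) : ∃ C, 0 < C ∧ ∀ x, |f x| ≤ C := by
  refine ⟨|f 0| + (eVariationOn f (Set.Icc 0 1)).toReal + 1, by positivity, fun x => ?_⟩
  have hp : Function.Periodic f 1 := hf_per
  have h1 : f x = f (Int.fract x) := by
    have := hp.sub_zsmul_eq ⌊x⌋ (x := x)
    simp only [zsmul_eq_mul, mul_one] at this
    rw [← this]
    rfl
  have h2 := hf_bv.dist_le (x := Int.fract x) (y := 0)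
    ⟨Int.fract_nonneg x, (Int.fract_lt_one x).le⟩ ⟨le_rfl, zero_le_one⟩
  rw [Real.dist_eq] at h2
  rw [h1]
  have h3 := abs_sub_abs_le_abs_sub (f (Int.fract x)) (f 0)
  linarith

/-- For monotone `p`, the integral of `p (x + t) - p x` telescopes to the difference of the
integrals of `p` over `[1, 1 + t]` and `[0, t]`. -/
lemma MonotoneOn.integral_shift_le {p : ℝ → ℝ} (hp : MonotoneOn p (Set.Icc 0 2)) {t : ℝ}
    (ht0 : 0 ≤ t) (ht1 : t ≤ 1) :
    IntervalIntegrable (fun x => p (x + t) - p x) volume 0 1 ∧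
      ∫ x in (0 : ℝ)..1, (p (x + t) - p x) ≤ t * (p 2 - p 0) := by
  have hi : ∀ a b, 0 ≤ a → a ≤ b → b ≤ 2 → IntervalIntegrable p volume a b := by
    intro a b ha hab hb
    refine MonotoneOn.intervalIntegrable (hp.mono ?_)
    rw [Set.uIcc_of_le hab]
    exact Set.Icc_subset_Icc ha hb
  have hi1 : IntervalIntegrable (fun x => p (x + t)) volume 0 1 := by
    have := (hi t (1 + t) ht0 (by linarith) (by linarith)).comp_add_right t
    simpa using this
  refine ⟨hi1.sub (hi 0 1 le_rfl zero_le_one one_le_two), ?_⟩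
  rw [intervalIntegral.integral_sub hi1 (hi 0 1 le_rfl zero_le_one one_le_two),
    intervalIntegral.integral_comp_add_right, zero_add]
  have e1 := intervalIntegral.integral_add_adjacent_intervals
    (hi 0 t le_rfl ht0 (by linarith)) (hi t (1 + t) ht0 (by linarith) (by linarith))
  have e2 := intervalIntegral.integral_add_adjacent_intervals
    (hi 0 1 le_rfl zero_le_one one_le_two) (hi 1 (1 + t) zero_le_one (by linarith) (by linarith))
  have e3 : ∫ x in (1 : ℝ)..(1 + t), p x ≤ ∫ x in (1 : ℝ)..(1 + t), p 2 := by
    refine intervalIntegral.integral_mono_on (by linarith)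
      (hi 1 (1 + t) zero_le_one (by linarith) (by linarith)) (by simp) fun x hx => ?_
    exact hp ⟨by linarith [hx.1], by linarith [hx.2]⟩ ⟨by norm_num, le_rfl⟩ (by linarith [hx.2])
  have e4 : ∫ x in (0 : ℝ)..t, p 0 ≤ ∫ x in (0 : ℝ)..t, p x := by
    refine intervalIntegral.integral_mono_on ht0 (by simp)
      (hi 0 t le_rfl ht0 (by linarith)) fun x hx => ?_
    exact hp ⟨le_rfl, by norm_num⟩ ⟨by linarith [hx.1], by linarith [hx.2]⟩ hx.1
  simp only [intervalIntegral.integral_const, smul_eq_mul] at e3 e4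
  linarith

lemma intervalIntegrable_of_bounded {f : ℝ → ℝ} (hm : Measurable f) {C : ℝ} (hC : ∀ x, |f x| ≤ C)
    (a b : ℝ) : IntervalIntegrable f volume a b := by
  refine (intervalIntegrable_const (c := C)).mono_fun hm.aestronglyMeasurable ?_
  refine Filter.Eventually.of_forall fun x => ?_
  simp only [Real.norm_eq_abs]
  exact (hC x).trans (le_abs_self C)

lemma integral_periodic_shift {h : ℝ → ℝ} (hp : Function.Periodic h 1) (t : ℝ) :
    ∫ x in (0 : ℝ)..1, h (x + t) = ∫ x in (0 : ℝ)..1, h x := by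
  rw [intervalIntegral.integral_comp_add_right, zero_add, add_comm 1 t,
    hp.intervalIntegral_add_eq t 0, zero_add]

/-- The `L¹` modulus of continuity of a periodic function of bounded variation is linear. -/
lemma exists_integral_shift_le {f : ℝ → ℝ} (hf_meas : Measurable f)
    (hf_per : ∀ x, f (x + 1) = f x) (hf_bv : BoundedVariationOn f (Set.Icc 0 1)) :
    ∃ V, 0 ≤ V ∧ ∀ t, 0 ≤ t → t ≤ 1 → ∫ x in (0 : ℝ)..1, |f (x + t) - f x| ≤ V * t := by
  obtain ⟨C, hC0, hC⟩ := exists_bound_of_bv hf_per hf_bv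
  have hbv2 : BoundedVariationOn f (Set.Icc 0 2) := by
    have h := eVariationOn.Icc_add_Icc f (s := Set.univ) (a := (0 : ℝ)) (b := 1) (c := 2)
      zero_le_one one_le_two (Set.mem_univ _)
    simp only [Set.univ_inter] at h
    have h2 : eVariationOn f (Set.Icc 1 2) ≤ eVariationOn f (Set.Icc 0 1) := by
      have h3 := eVariationOn.comp_le_of_monotoneOn f (s := Set.Icc 0 1) (t := Set.Icc 1 2)
        (fun x : ℝ => x - 1) (fun x _ y _ hxy => by dsimp only; linarith)
        (fun x hx => ⟨by linarith [hx.1], by linarith [hx.2]⟩)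
      have h4 : f ∘ (fun x : ℝ => x - 1) = f := by
        ext x
        have := hf_per (x - 1)
        simp only [sub_add_cancel] at this
        simp [this]
      rwa [h4] at h3
    unfold BoundedVariationOn at hf_bv ⊢
    rw [← h]
    exact ENNReal.add_ne_top.2 ⟨hf_bv, ne_top_of_le_ne_top hf_bv h2⟩
  obtain ⟨p, q, hp, hq, hfpq⟩ :=
    hbv2.locallyBoundedVariationOn.exists_monotoneOn_sub_monotoneOn
  refine ⟨(p 2 - p 0) + (q 2 - q 0), ?_, fun t ht0 ht1 => ?_⟩
  · have h1 := hp (a := 0) (b := 2) ⟨le_rfl, by norm_num⟩ ⟨by norm_num, le_rfl⟩ (by norm_num)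
    have h2 := hq (a := 0) (b := 2) ⟨le_rfl, by norm_num⟩ ⟨by norm_num, le_rfl⟩ (by norm_num)
    linarith
  · obtain ⟨hip, hp'⟩ := hp.integral_shift_le ht0 ht1
    obtain ⟨hiq, hq'⟩ := hq.integral_shift_le ht0 ht1
    have hle : ∫ x in (0 : ℝ)..1, |f (x + t) - f x| ≤
        ∫ x in (0 : ℝ)..1, ((p (x + t) - p x) + (q (x + t) - q x)) := by
      refine intervalIntegral.integral_mono_on zero_le_one ?_ (hip.add hiq) fun x hx => ?_
      · refine intervalIntegrable_of_bounded (C := C + C) (by fun_prop) (fun x => ?_) _ _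
        rw [abs_abs]
        exact (abs_sub _ _).trans (add_le_add (hC _) (hC _))
      · have hx0 : x ∈ Set.Icc (0 : ℝ) 2 := ⟨hx.1, by linarith [hx.2]⟩
        have hx1 : x + t ∈ Set.Icc (0 : ℝ) 2 := ⟨by linarith [hx.1], by linarith [hx.2]⟩
        have h1 := hp hx0 hx1 (by linarith)
        have h2 := hq hx0 hx1 (by linarith)
        rw [hfpq]
        simp only [Pi.sub_apply]
        rw [abs_le]
        constructor <;> linarith
    rw [intervalIntegral.integral_add hip hiq] at hle
    linarith

/-- The linear bound on the `L¹` modulus of continuity, put in the periodic form that the kernel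
below integrates well against. -/
lemma integral_shift_le_sin {f : ℝ → ℝ} (hf_per : ∀ x, f (x + 1) = f x) {V : ℝ} (hV0 : 0 ≤ V)
    (hV : ∀ t, 0 ≤ t → t ≤ 1 → ∫ x in (0 : ℝ)..1, |f (x + t) - f x| ≤ V * t)
    {t : ℝ} (ht0 : 0 ≤ t) (ht1 : t ≤ 1) :
    ∫ x in (0 : ℝ)..1, |f (x + t) - f x| ≤ V * sin (π * t) := by
  -- On `[0, 1/2]` the function `sin (π u)` dominates `2 u`, by concavity.
  have key : ∀ u : ℝ, 0 ≤ u → u ≤ 1 / 2 → u ≤ sin (π * u) := by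
    intro u h0 h1
    have h := Real.mul_le_sin (x := π * u) (by positivity) (by nlinarith [Real.pi_pos])
    have : 2 / π * (π * u) = 2 * u := by field_simp
    linarith
  rcases le_total t (1 / 2) with h | h
  · exact (hV t ht0 ht1).trans (mul_le_mul_of_nonneg_left (key t ht0 h) hV0)
  · -- By periodicity a shift by `t` costs as much as a shift by `1 - t`.
    have h1 : ∫ x in (0 : ℝ)..1, |f (x + t) - f x| =
        ∫ x in (0 : ℝ)..1, |f (x + (1 - t)) - f x| := by
      have e1 : ∫ x in (0 : ℝ)..1, |f (x + t) - f x| =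
          ∫ x in (0 : ℝ)..1, (fun y => |f (y + (1 - t)) - f y|) (x + t) := by
        refine intervalIntegral.integral_congr fun x _ => ?_
        have : f (x + t + (1 - t)) = f x := by rw [← hf_per x]; congr 1; ring
        simp only [this]
        rw [abs_sub_comm]
      have hper : Function.Periodic (fun y => |f (y + (1 - t)) - f y|) 1 := by
        intro y
        have : f (y + 1 + (1 - t)) = f (y + (1 - t)) := by
          rw [← hf_per (y + (1 - t))]; congr 1; ring
        simp only [this, hf_per y]
      rw [e1, integral_periodic_shift hper]
    rw [h1]
    refine (hV (1 - t) (by linarith) (by linarith)).trans (mul_le_mul_of_nonneg_left ?_ hV0)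
    have h2 := key (1 - t) (by linarith) (by linarith)
    rwa [show π * (1 - t) = π - π * t by ring, Real.sin_pi_sub] at h2

/-- The normalising constant of the kernel `cos (π t) ^ (2 D)` on `[0, 1]`. -/
def cosMass (D : ℕ) : ℝ := ∫ t in (0 : ℝ)..1, cos (π * t) ^ (2 * D)

lemma cosMass_succ (D : ℕ) : cosMass (D + 1) = (2 * D + 1) / (2 * D + 2) * cosMass D := by
  unfold cosMass
  have h : ∀ k, ∫ t in (0 : ℝ)..1, cos (π * t) ^ k = π⁻¹ * ∫ t in (0 : ℝ)..π, cos t ^ k := by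
    intro k
    rw [intervalIntegral.integral_comp_mul_left (fun t => cos t ^ k) Real.pi_ne_zero]
    simp
  rw [h, h, show 2 * (D + 1) = 2 * D + 2 by ring, integral_cos_pow]
  simp
  ring

lemma cosMass_pos (D : ℕ) : 0 < cosMass D := by
  induction D with
  | zero => simp [cosMass]
  | succ D ih => rw [cosMass_succ]; positivity

/-- The nonnegative trigonometric kernel `cos (π t) ^ (2 D)`, normalised to have integral
one on `[0, 1]`, and concentrated near the integers. -/
def kernel (D : ℕ) (t : ℝ) : ℝ := cos (π * t) ^ (2 * D) / cosMass D

lemma kernel_nonneg (D : ℕ) (t : ℝ) : 0 ≤ kernel D t :=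
  div_nonneg (by rw [pow_mul]; positivity) (cosMass_pos D).le

lemma continuous_kernel (D : ℕ) : Continuous (kernel D) := by
  unfold kernel
  fun_prop

lemma kernel_neg (D : ℕ) (t : ℝ) : kernel D (-t) = kernel D t := by
  simp [kernel]

lemma kernel_periodic (D : ℕ) : Function.Periodic (kernel D) 1 := by
  intro t
  unfold kernel
  rw [mul_add, mul_one, Real.cos_add_pi, pow_mul, pow_mul, neg_sq]

lemma integral_kernel (D : ℕ) : ∫ t in (0 : ℝ)..1, kernel D t = 1 := by
  unfold kernel
  rw [intervalIntegral.integral_div]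
  exact div_self (cosMass_pos D).ne'

lemma integral_kernel_mul_sin_sq (D : ℕ) :
    ∫ t in (0 : ℝ)..1, kernel D t * sin (π * t) ^ 2 = 1 / (2 * D + 2) := by
  have h : ∀ t, kernel D t * sin (π * t) ^ 2 =
      kernel D t - cos (π * t) ^ (2 * (D + 1)) / cosMass D := by
    intro t
    unfold kernel
    rw [Real.sin_sq]
    ring
  simp only [h]
  rw [intervalIntegral.integral_sub ((continuous_kernel D).intervalIntegrable _ _)
    (Continuous.intervalIntegrable (by fun_prop) _ _), integral_kernel,
    intervalIntegral.integral_div]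
  have h2 := cosMass_succ D
  rw [cosMass] at h2
  rw [h2]
  have := (cosMass_pos D).ne'
  field_simp
  ring

lemma integral_kernel_mul_sin_le {D : ℕ} (hD : 0 < D) :
    ∫ t in (0 : ℝ)..1, kernel D t * sin (π * t) ≤ 1 / √D := by
  have hD' : (0 : ℝ) < D := by exact_mod_cast hD
  have hs : 0 < √(D : ℝ) := Real.sqrt_pos.2 hD'
  have hss : √(D : ℝ) ^ 2 = D := Real.sq_sqrt hD'.le
  have hk := continuous_kernel D
  -- The inequality `2 u ≤ a + u² / a` with `a = 1 / √D` reduces the first moment to the second.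
  have hle : ∫ t in (0 : ℝ)..1, kernel D t * sin (π * t) ≤
      ∫ t in (0 : ℝ)..1, (kernel D t * (1 / (2 * √D)) +
        kernel D t * sin (π * t) ^ 2 * (√D / 2)) := by
    refine intervalIntegral.integral_mono_on zero_le_one
      (Continuous.intervalIntegrable (by fun_prop) _ _)
      (Continuous.intervalIntegrable (by fun_prop) _ _) fun t _ => ?_
    rw [mul_assoc, ← mul_add]
    refine mul_le_mul_of_nonneg_left ?_ (kernel_nonneg D t)
    have : 1 / (2 * √(D : ℝ)) + sin (π * t) ^ 2 * (√D / 2) - sin (π * t) =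
        (1 - √D * sin (π * t)) ^ 2 / (2 * √D) := by
      field_simp
      ring
    have h2 : 0 ≤ (1 - √(D : ℝ) * sin (π * t)) ^ 2 / (2 * √D) := by positivity
    linarith
  rw [intervalIntegral.integral_add (Continuous.intervalIntegrable (by fun_prop) _ _)
    (Continuous.intervalIntegrable (by fun_prop) _ _), intervalIntegral.integral_mul_const,
    intervalIntegral.integral_mul_const, integral_kernel, integral_kernel_mul_sin_sq] at hle
  refine hle.trans ?_
  have h3 : 1 / (2 * (D : ℝ) + 2) * (√D / 2) ≤ 1 / (2 * √D) := by
    rw [div_mul_div_comm, div_le_div_iff₀ (by positivity) (by positivity)]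
    nlinarith
  have h4 : 1 / √(D : ℝ) = 1 / (2 * √D) + 1 / (2 * √D) := by field_simp; norm_num
  linarith

lemma kernel_eq_sum_char (D : ℕ) (u : ℝ) : (kernel D u : ℂ) =
    ∑ m ∈ Finset.range (2 * D + 1),
      ((2 * D).choose m / (4 ^ D * cosMass D) : ℂ) * char ((m : ℤ) - D) u := by
  unfold kernel
  push_cast
  rw [Complex.cos, div_pow, add_pow, Finset.sum_div, Finset.sum_div]
  refine Finset.sum_congr rfl fun m hm => ?_
  have hm' : m ≤ 2 * D := by have := Finset.mem_range.1 hm; omega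
  rw [← Complex.exp_nat_mul, ← Complex.exp_nat_mul, ← Complex.exp_add, char, pow_mul]
  have hexp : (m : ℂ) * (π * u * Complex.I) + ((2 * D - m : ℕ) : ℂ) * (-(π * u) * Complex.I) =
      2 * π * Complex.I * (((m : ℤ) - D : ℤ) : ℂ) * u := by
    push_cast [Nat.cast_sub hm']
    ring
  rw [hexp]
  have : (cosMass D : ℂ) ≠ 0 := by exact_mod_cast (cosMass_pos D).ne'
  norm_num
  field_simp

/-- The convolution of `f` with `kernel D`. -/
def smooth (f : ℝ → ℝ) (D : ℕ) (x : ℝ) : ℝ := ∫ t in (0 : ℝ)..1, kernel D t * f (x + t)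

lemma intervalIntegrable_kernel_mul {f : ℝ → ℝ} (hf_meas : Measurable f)
    {C : ℝ} (hC : ∀ x, |f x| ≤ C) (D : ℕ) (x : ℝ) :
    IntervalIntegrable (fun t => kernel D t * f (x + t)) volume 0 1 :=
  (intervalIntegrable_of_bounded (f := fun t => f (x + t)) (by fun_prop) (fun t => hC _)
    _ _).continuousOn_mul (continuous_kernel D).continuousOn

lemma abs_smooth_le {f : ℝ → ℝ} (hf_meas : Measurable f)
    {C : ℝ} (hC : ∀ x, |f x| ≤ C) (D : ℕ) (x : ℝ) : |smooth f D x| ≤ C := by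
  unfold smooth
  refine (intervalIntegral.abs_integral_le_integral_abs zero_le_one).trans ?_
  have : ∫ t in (0 : ℝ)..1, |kernel D t * f (x + t)| ≤ ∫ t in (0 : ℝ)..1, kernel D t * C := by
    refine intervalIntegral.integral_mono_on zero_le_one
      (intervalIntegrable_kernel_mul hf_meas hC D x).abs
      (((continuous_kernel D).mul continuous_const).intervalIntegrable _ _) fun t _ => ?_
    rw [abs_mul, abs_of_nonneg (kernel_nonneg D t)]
    exact mul_le_mul_of_nonneg_left (hC _) (kernel_nonneg D t)
  rwa [intervalIntegral.integral_mul_const, integral_kernel, one_mul] at this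

lemma isTrigPoly_smooth {f : ℝ → ℝ} (hf_meas : Measurable f) (hf_per : ∀ x, f (x + 1) = f x)
    {C : ℝ} (hC : ∀ x, |f x| ≤ C) (D : ℕ) : IsTrigPoly D (smooth f D) := by
  refine ⟨fun m => ((2 * D).choose m / (4 ^ D * cosMass D) : ℂ) *
    ∫ s in (0 : ℝ)..1, char ((m : ℤ) - D) (-s) * f s, fun x => ?_⟩
  have h1 : smooth f D x = ∫ s in (0 : ℝ)..1, kernel D (x - s) * f s := by
    have e1 : smooth f D x = ∫ t in (0 : ℝ)..1, (fun s => kernel D (x - s) * f s) (t + x) := by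
      refine intervalIntegral.integral_congr fun t _ => ?_
      have : kernel D (x - (x + t)) = kernel D t := by rw [← kernel_neg]; congr 1; ring
      simp only [add_comm t x, this]
    have hper : Function.Periodic (fun s => kernel D (x - s) * f s) 1 := by
      intro s
      have : kernel D (x - (s + 1)) = kernel D (x - s) := by
        rw [← kernel_periodic D (x - (s + 1))]; congr 1; ring
      simp only [this, hf_per s]
    rw [e1, integral_periodic_shift hper]
  have hfi : IntervalIntegrable (fun s => (f s : ℂ)) volume 0 1 :=
    ⟨(intervalIntegrable_of_bounded hf_meas hC 0 1).1.ofReal,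
      (intervalIntegrable_of_bounded hf_meas hC 0 1).2.ofReal⟩
  rw [h1, ← intervalIntegral.integral_ofReal]
  simp only [Complex.ofReal_mul, kernel_eq_sum_char, Finset.sum_mul]
  rw [intervalIntegral.integral_finsetSum]
  · refine Finset.sum_congr rfl fun m _ => ?_
    rw [mul_assoc, ← intervalIntegral.integral_mul_const,
      ← intervalIntegral.integral_const_mul]
    refine intervalIntegral.integral_congr fun s _ => ?_
    have : char ((m : ℤ) - D) (x - s) = char ((m : ℤ) - D) (-s) * char ((m : ℤ) - D) x := by
      unfold char
      rw [← Complex.exp_add]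
      push_cast
      ring_nf
    simp only [this]
    ring
  · intro m _
    refine hfi.continuousOn_mul (Continuous.continuousOn ?_)
    exact continuous_const.mul ((continuous_char _).comp (by fun_prop))

lemma integrable_kernel_prod {f : ℝ → ℝ} (hf_meas : Measurable f)
    {C : ℝ} (hC : ∀ x, |f x| ≤ C) (D : ℕ) :
    Integrable (Function.uncurry fun x t => kernel D t * f (x + t))
      ((volume.restrict (Set.Ioc (0 : ℝ) 1)).prod (volume.restrict (Set.Ioc (0 : ℝ) 1))) := by
  refine Integrable.of_bound (C := 1 / cosMass D * C) ?_ (Eventually.of_forall ?_)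
  · have := (continuous_kernel D).measurable
    exact Measurable.aestronglyMeasurable (by unfold Function.uncurry; fun_prop)
  · rintro ⟨x, t⟩
    simp only [Function.uncurry_apply_pair, norm_mul, Real.norm_eq_abs]
    have hC0 : 0 ≤ C := (abs_nonneg _).trans (hC 0)
    have hpos := cosMass_pos D
    refine mul_le_mul ?_ (hC _) (abs_nonneg _) (by positivity)
    rw [abs_of_nonneg (kernel_nonneg D t), kernel]
    refine div_le_div_of_nonneg_right ?_ hpos.le
    rw [pow_mul]
    exact pow_le_one₀ (by positivity) (Real.cos_sq_le_one _)

lemma integral_smooth {f : ℝ → ℝ} (hf_meas : Measurable f) (hf_per : ∀ x, f (x + 1) = f x)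
    {C : ℝ} (hC : ∀ x, |f x| ≤ C) (D : ℕ) (hf_int : ∫ x in (0 : ℝ)..1, f x = 0) :
    ∫ x in (0 : ℝ)..1, smooth f D x = 0 := by
  have hp : Function.Periodic f 1 := hf_per
  unfold smooth
  simp only [intervalIntegral.integral_of_le zero_le_one]
  rw [integral_integral_swap (integrable_kernel_prod hf_meas hC D)]
  simp only [← intervalIntegral.integral_of_le zero_le_one]
  simp only [intervalIntegral.integral_const_mul, integral_periodic_shift hp, hf_int, mul_zero,
    intervalIntegral.integral_zero]

/-- The `L¹` error of smoothing is at most the kernel average of the `L¹` modulus of continuity. -/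
lemma integral_abs_smooth_sub_le {f : ℝ → ℝ} (hf_meas : Measurable f)
    (hf_per : ∀ x, f (x + 1) = f x) {C : ℝ} (hC : ∀ x, |f x| ≤ C) (D : ℕ)
    {V : ℝ} (hV0 : 0 ≤ V)
    (hV : ∀ t, 0 ≤ t → t ≤ 1 → ∫ x in (0 : ℝ)..1, |f (x + t) - f x| ≤ V * t) (hD : 0 < D) :
    ∫ x in (0 : ℝ)..1, |smooth f D x - f x| ≤ V / √D := by
  have hCC : ∀ x, |smooth f D x| ≤ C := abs_smooth_le hf_meas hC D
  have hgc := (isTrigPoly_smooth hf_meas hf_per hC D).continuous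
  have hintg : Integrable (Function.uncurry fun x t => kernel D t * |f (x + t) - f x|)
      ((volume.restrict (Set.Ioc (0 : ℝ) 1)).prod (volume.restrict (Set.Ioc (0 : ℝ) 1))) := by
    refine Integrable.of_bound (C := 1 / cosMass D * (C + C)) ?_ (Eventually.of_forall ?_)
    · have := (continuous_kernel D).measurable
      exact Measurable.aestronglyMeasurable (by unfold Function.uncurry; fun_prop)
    · rintro ⟨x, t⟩
      simp only [Function.uncurry_apply_pair, norm_mul, Real.norm_eq_abs, abs_abs]
      have hC0 : 0 ≤ C := (abs_nonneg _).trans (hC 0)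
      have hpos := cosMass_pos D
      refine mul_le_mul ?_ ((abs_sub _ _).trans (add_le_add (hC _) (hC _))) (abs_nonneg _)
        (by positivity)
      rw [abs_of_nonneg (kernel_nonneg D t), kernel]
      refine div_le_div_of_nonneg_right ?_ hpos.le
      rw [pow_mul]
      exact pow_le_one₀ (by positivity) (Real.cos_sq_le_one _)
  have hpt : ∀ x, |smooth f D x - f x| ≤ ∫ t in (0 : ℝ)..1, kernel D t * |f (x + t) - f x| := by
    intro x
    have e : smooth f D x - f x = ∫ t in (0 : ℝ)..1, kernel D t * (f (x + t) - f x) := by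
      simp only [mul_sub]
      rw [intervalIntegral.integral_sub (intervalIntegrable_kernel_mul hf_meas hC D x)
        (((continuous_kernel D).fun_mul continuous_const).intervalIntegrable _ _),
        intervalIntegral.integral_mul_const, integral_kernel, one_mul, smooth]
    rw [e]
    refine (intervalIntegral.abs_integral_le_integral_abs zero_le_one).trans_eq ?_
    refine intervalIntegral.integral_congr fun t _ => ?_
    simp only [abs_mul, abs_of_nonneg (kernel_nonneg D t)]
  have h1 : ∫ x in (0 : ℝ)..1, |smooth f D x - f x| ≤
      ∫ x in (0 : ℝ)..1, ∫ t in (0 : ℝ)..1, kernel D t * |f (x + t) - f x| := by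
    refine intervalIntegral.integral_mono_on zero_le_one ?_ ?_ fun x _ => hpt x
    · exact ((hgc.intervalIntegrable 0 1).sub (intervalIntegrable_of_bounded hf_meas hC 0 1)).abs
    · rw [intervalIntegrable_iff_integrableOn_Ioc_of_le zero_le_one]
      simp only [intervalIntegral.integral_of_le zero_le_one]
      exact hintg.integral_prod_left
  have h2 : ∫ x in (0 : ℝ)..1, ∫ t in (0 : ℝ)..1, kernel D t * |f (x + t) - f x| =
      ∫ t in (0 : ℝ)..1, kernel D t * ∫ x in (0 : ℝ)..1, |f (x + t) - f x| := by
    simp only [intervalIntegral.integral_of_le zero_le_one]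
    rw [integral_integral_swap hintg]
    simp only [integral_const_mul]
  have h3 : ∫ t in (0 : ℝ)..1, kernel D t * ∫ x in (0 : ℝ)..1, |f (x + t) - f x| ≤
      ∫ t in (0 : ℝ)..1, kernel D t * sin (π * t) * V := by
    refine intervalIntegral.integral_mono_on zero_le_one ?_ ?_ fun t ht => ?_
    · rw [intervalIntegrable_iff_integrableOn_Ioc_of_le zero_le_one]
      simp only [intervalIntegral.integral_of_le zero_le_one]
      simp only [← integral_const_mul]
      exact hintg.integral_prod_right
    · have := continuous_kernel D
      exact Continuous.intervalIntegrable (by fun_prop) _ _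
    · rw [mul_assoc, mul_comm (sin _) V]
      exact mul_le_mul_of_nonneg_left (integral_shift_le_sin hf_per hV0 hV ht.1 ht.2)
        (kernel_nonneg D t)
  rw [intervalIntegral.integral_mul_const] at h3
  calc _ ≤ _ := h1
    _ = _ := h2
    _ ≤ _ := h3
    _ ≤ 1 / √D * V := mul_le_mul_of_nonneg_right (integral_kernel_mul_sin_le hD) hV0
    _ = V / √D := by ring

/-! ### Discarding the small elements of the sequence -/

open scoped Classical in
/-- The indices below `N` whose element is not among the `M` smallest ones. -/
def goodSet (n : ℕ → ℕ) (M N : ℕ) : Finset ℕ :=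
  (Finset.range N).filter fun k => ¬ AmongSmallest n M k

open scoped Classical in
/-- The indices below `N` whose element is among the `M` smallest ones. -/
def badSet (n : ℕ → ℕ) (M N : ℕ) : Finset ℕ :=
  (Finset.range N).filter fun k => AmongSmallest n M k

lemma mem_badSet {n : ℕ → ℕ} {M N k : ℕ} :
    k ∈ badSet n M N ↔ k < N ∧ AmongSmallest n M k := by
  simp [badSet]

lemma mem_goodSet {n : ℕ → ℕ} {M N k : ℕ} :
    k ∈ goodSet n M N ↔ k < N ∧ ¬ AmongSmallest n M k := by
  simp [goodSet]

lemma sum_bad_add_good (n : ℕ → ℕ) (M N : ℕ) (F : ℕ → ℝ) :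
    ∑ k ∈ badSet n M N, F k + ∑ k ∈ goodSet n M N, F k = ∑ k ∈ Finset.range N, F k := by
  classical
  exact Finset.sum_filter_add_sum_filter_not _ _ _

lemma card_badSet_le {n : ℕ → ℕ} (hn : Function.Injective n) (M N : ℕ) :
    (badSet n M N).card ≤ M := by
  rcases (badSet n M N).eq_empty_or_nonempty with h | h
  · simp [h]
  · -- All of these elements are at most the largest one, which is itself among the `M` smallest.
    obtain ⟨k, hk, hmax⟩ := (badSet n M N).exists_max_image n h
    have hk' : AmongSmallest n M k := (mem_badSet.1 hk).2
    have hfin : {j : ℕ | n j ≤ n k}.Finite :=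
      (Set.finite_Iic (n k)).preimage hn.injOn
    calc (badSet n M N).card = ((badSet n M N : Finset ℕ) : Set ℕ).ncard :=
          (Set.ncard_coe_finset _).symm
      _ ≤ {j : ℕ | n j ≤ n k}.ncard := Set.ncard_le_ncard (fun j hj => hmax j hj) hfin
      _ ≤ M := hk'

lemma card_bad_add_good (n : ℕ → ℕ) (M N : ℕ) :
    (badSet n M N).card + (goodSet n M N).card = N := by
  have h : ((badSet n M N).card : ℝ) + (goodSet n M N).card = N := by
    simpa using sum_bad_add_good n M N fun _ => 1
  exact_mod_cast h

/-- Condition `A_ω` only concerns relations with at least two terms; a relation with a single term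
is impossible since the elements are positive. -/
lemma noRelation_goodSet {ω : ℕ → ℝ} {n : ℕ → ℕ} (hn : ∀ k, 0 < n k) {N₀ : ℕ}
    (hA : CondAWith ω n N₀) {M : ℕ} (hM : N₀ ≤ M) (N : ℕ) {r B : ℕ} (hr : (r : ℝ) ≤ ω M)
    (hB : (B : ℝ) ≤ (M : ℝ) ^ ω M) : NoRelation n (goodSet n M N) r B := by
  rintro ν ⟨hs, hcard, hbd⟩ h0
  by_contra hne
  have hpos : 0 < ν.support.card := Finset.card_pos.2 (Finsupp.support_nonempty_iff.2 hne)
  rcases Nat.lt_or_ge ν.support.card 2 with hlt | hge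
  · obtain ⟨a, b, hb, rfl⟩ := Finsupp.card_support_eq_one'.1 (show ν.support.card = 1 by omega)
    simp only [dot, Finsupp.linearCombination_single, smul_eq_mul, mul_eq_zero] at h0
    have := hn a
    omega
  · let e := ν.support.equivFin.symm
    have hsum : ∑ i, ν (e i) * (n (e i) : ℤ) = 0 := by
      rw [Equiv.sum_comp e (fun k : ν.support => ν k * (n k : ℤ)),
        Finset.sum_coe_sort ν.support (fun k => ν k * (n k : ℤ))]
      simpa [dot, Finsupp.linearCombination_apply, Finsupp.sum] using h0
    have hall := hA M hM ν.support.card (fun i => (e i : ℕ)) (fun i => ν (e i)) hge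
      (le_trans (by exact_mod_cast hcard) hr) (Subtype.val_injective.comp e.injective)
      (fun i => Finsupp.mem_support_iff.1 (e i).2)
      (fun i => le_trans (by exact_mod_cast hbd (e i)) hB) hsum ⟨0, hpos⟩
    exact (mem_goodSet.1 (hs (e ⟨0, hpos⟩).2)).2 hall

/-- The cutoff `⌊N^(1/4)⌋`: negligible against `√N`, yet of polynomial size. -/
def cut (N : ℕ) : ℕ := Nat.sqrt (Nat.sqrt N)

lemma cut_pow_le (N : ℕ) : cut N ^ 4 ≤ N := by
  have h1 : cut N ^ 2 ≤ Nat.sqrt N := Nat.sqrt_le' _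
  have h2 : Nat.sqrt N ^ 2 ≤ N := Nat.sqrt_le' _
  calc cut N ^ 4 = (cut N ^ 2) ^ 2 := by ring
    _ ≤ Nat.sqrt N ^ 2 := Nat.pow_le_pow_left h1 2
    _ ≤ N := h2

lemma lt_cut_pow (N : ℕ) : N < (cut N + 1) ^ 4 := by
  have h1 : Nat.sqrt N < (cut N + 1) ^ 2 := Nat.lt_succ_sqrt' _
  have h2 : N < (Nat.sqrt N + 1) ^ 2 := Nat.lt_succ_sqrt' _
  calc N < (Nat.sqrt N + 1) ^ 2 := h2
    _ ≤ ((cut N + 1) ^ 2) ^ 2 := Nat.pow_le_pow_left h1 2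
    _ = (cut N + 1) ^ 4 := by ring

lemma tendsto_cut : Tendsto cut atTop atTop := by
  refine tendsto_atTop.2 fun b => ?_
  filter_upwards [eventually_ge_atTop ((b + 1) ^ 4)] with N hN
  by_contra h
  have h1 : (cut N + 1) ^ 4 ≤ (b + 1) ^ 4 := Nat.pow_le_pow_left (by omega) 4
  have := lt_cut_pow N
  omega

lemma tendsto_cut_div_sqrt : Tendsto (fun N : ℕ => (cut N : ℝ) / √N) atTop (𝓝 0) := by
  have hz : Tendsto (fun N : ℕ => ((cut N : ℝ))⁻¹) atTop (𝓝 0) :=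
    tendsto_inv_atTop_zero.comp (tendsto_natCast_atTop_atTop.comp tendsto_cut)
  refine squeeze_zero' (Eventually.of_forall fun N => by positivity) ?_ hz
  filter_upwards [eventually_gt_atTop 0, tendsto_cut.eventually_gt_atTop 0] with N hN hc
  have hN' : (0 : ℝ) < √N := Real.sqrt_pos.2 (by exact_mod_cast hN)
  have hc' : (0 : ℝ) < cut N := by exact_mod_cast hc
  rw [div_le_iff₀ hN', inv_mul_eq_div, le_div_iff₀ hc']
  refine Real.le_sqrt_of_sq_le ?_
  have : ((cut N : ℝ)) ^ 4 ≤ N := by exact_mod_cast cut_pow_le N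
  calc ((cut N : ℝ) * (cut N : ℝ)) ^ 2 = (cut N : ℝ) ^ 4 := by ring
    _ ≤ (N : ℝ) := this

lemma tendsto_card_goodSet {n : ℕ → ℕ} (hn : Function.Injective n) :
    Tendsto (fun N : ℕ => ((goodSet n (cut N) N).card : ℝ) / N) atTop (𝓝 1) := by
  have h1 : Tendsto (fun N : ℕ => 1 - (cut N : ℝ) / √N) atTop (𝓝 1) := by
    simpa using tendsto_cut_div_sqrt.const_sub 1
  refine tendsto_of_tendsto_of_tendsto_of_le_of_le' h1 tendsto_const_nhds ?_ ?_
  · filter_upwards [eventually_gt_atTop 0] with N hN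
    have hN1 : (1 : ℝ) ≤ N := by exact_mod_cast hN
    have h2 : ((badSet n (cut N) N).card : ℝ) + (goodSet n (cut N) N).card = N := by
      exact_mod_cast card_bad_add_good n (cut N) N
    have h3 : ((badSet n (cut N) N).card : ℝ) ≤ cut N := by
      exact_mod_cast card_badSet_le hn (cut N) N
    have h4 : (cut N : ℝ) / N ≤ cut N / √N := by
      refine div_le_div_of_nonneg_left (by positivity) (Real.sqrt_pos.2 (by linarith)) ?_
      rw [Real.sqrt_le_left (by positivity)]
      nlinarith
    have h5 : ((goodSet n (cut N) N).card : ℝ) / N =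
        1 - ((badSet n (cut N) N).card : ℝ) / N := by
      field_simp
      linarith
    have h6 : ((badSet n (cut N) N).card : ℝ) / N ≤ cut N / N :=
      div_le_div_of_nonneg_right h3 (by positivity)
    linarith
  · refine Eventually.of_forall fun N => div_le_one_of_le₀ ?_ (by positivity)
    have := card_bad_add_good n (cut N) N
    exact_mod_cast (show (goodSet n (cut N) N).card ≤ N by omega)

/-- Coefficients of polynomial size in `N` are eventually allowed at the cutoff. -/
lemma eventually_le_cut_rpow {ω : ℕ → ℝ} (hω : Tendsto ω atTop atTop) (Q L : ℕ) :
    ∀ᶠ N : ℕ in atTop, ((Q * N ^ L : ℕ) : ℝ) ≤ (cut N : ℝ) ^ ω (cut N) := by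
  filter_upwards [tendsto_cut.eventually_ge_atTop 2, tendsto_cut.eventually_ge_atTop Q,
    (hω.comp tendsto_cut).eventually_ge_atTop ((8 * L + 1 : ℕ) : ℝ)] with N h2 hQ hw
  have h1 : N ≤ cut N ^ 8 := by
    calc N ≤ (cut N + 1) ^ 4 := (lt_cut_pow N).le
      _ ≤ (cut N ^ 2) ^ 4 := Nat.pow_le_pow_left (by nlinarith) 4
      _ = cut N ^ 8 := by ring
  have h3 : Q * N ^ L ≤ cut N ^ (8 * L + 1) := by
    calc Q * N ^ L ≤ cut N * (cut N ^ 8) ^ L := Nat.mul_le_mul hQ (Nat.pow_le_pow_left h1 L)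
      _ = cut N ^ (8 * L + 1) := by ring
  calc ((Q * N ^ L : ℕ) : ℝ) ≤ ((cut N ^ (8 * L + 1) : ℕ) : ℝ) := by exact_mod_cast h3
    _ = (cut N : ℝ) ^ ((8 * L + 1 : ℕ) : ℝ) := by rw [Real.rpow_natCast]; push_cast; rfl
    _ ≤ _ := Real.rpow_le_rpow_of_exponent_le (by exact_mod_cast (by omega : 1 ≤ cut N)) hw

/-! ### Convergence of moments -/

lemma abs_integral_pow_sub_le {F G : ℝ → ℝ} (hF : Measurable F) (hG : Measurable G) {K : ℝ}
    (hFK : ∀ x, |F x| ≤ K) (hGK : ∀ x, |G x| ≤ K) (q : ℕ) :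
    |(∫ x in (0 : ℝ)..1, F x ^ q) - ∫ x in (0 : ℝ)..1, G x ^ q| ≤
      q * K ^ (q - 1) * ∫ x in (0 : ℝ)..1, |F x - G x| := by
  have hK : 0 ≤ K := (abs_nonneg _).trans (hFK 0)
  have hi : ∀ {H : ℝ → ℝ}, Measurable H → (∀ x, |H x| ≤ K) →
      IntervalIntegrable (fun x => H x ^ q) volume 0 1 := fun hm hb =>
    intervalIntegrable_of_bounded (C := K ^ q) (hm.pow_const q)
      (fun x => by rw [abs_pow]; exact pow_le_pow_left₀ (abs_nonneg _) (hb x) q) _ _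
  rw [← intervalIntegral.integral_sub (hi hF hFK) (hi hG hGK),
    ← intervalIntegral.integral_const_mul]
  refine (intervalIntegral.abs_integral_le_integral_abs zero_le_one).trans ?_
  refine intervalIntegral.integral_mono_on zero_le_one ((hi hF hFK).sub (hi hG hGK)).abs
    (((intervalIntegrable_of_bounded hF hFK 0 1).sub
      (intervalIntegrable_of_bounded hG hGK 0 1)).abs.const_mul _) fun x _ => ?_
  refine (abs_pow_sub_pow_le _ _ _).trans ?_
  have h1 : max |F x| |G x| ^ (q - 1) ≤ K ^ (q - 1) :=
    pow_le_pow_left₀ (le_max_of_le_left (abs_nonneg _)) (max_le (hFK x) (hGK x)) _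
  calc |F x - G x| * q * max |F x| |G x| ^ (q - 1) ≤ |F x - G x| * q * K ^ (q - 1) := by gcongr
    _ = _ := by ring

lemma abs_sum_le_of_bound {f : ℝ → ℝ} {C : ℝ} (hC : ∀ x, |f x| ≤ C) (A : Finset ℕ) (n : ℕ → ℕ)
    (x : ℝ) : |∑ k ∈ A, f (n k * x)| ≤ A.card * C := by
  refine (Finset.abs_sum_le_sum_abs _ _).trans ?_
  refine (Finset.sum_le_card_nsmul A _ C fun k _ => hC _).trans_eq ?_
  rw [nsmul_eq_mul]

/-- Replacing `f` by `g` costs at most the `L¹` distance, because dilation by `n k` preserves the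
integrals of periodic functions. -/
lemma abs_integral_sum_pow_sub_le {n : ℕ → ℕ} (hn : ∀ k, 0 < n k) {f g : ℝ → ℝ}
    (hf : Measurable f) (hg : Measurable g) (hfp : Function.Periodic f 1)
    (hgp : Function.Periodic g 1) {C : ℝ} (hfC : ∀ x, |f x| ≤ C) (hgC : ∀ x, |g x| ≤ C)
    (A : Finset ℕ) (q : ℕ) :
    |(∫ x in (0 : ℝ)..1, (∑ k ∈ A, f (n k * x)) ^ q) -
        ∫ x in (0 : ℝ)..1, (∑ k ∈ A, g (n k * x)) ^ q| ≤
      q * (A.card * C) ^ (q - 1) * (A.card * ∫ x in (0 : ℝ)..1, |g x - f x|) := by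
  have hC0 : 0 ≤ C := (abs_nonneg _).trans (hfC 0)
  have hb : ∀ x, |(|g x - f x|)| ≤ C + C := fun x => by
    rw [abs_abs]
    exact (abs_sub _ _).trans (add_le_add (hgC x) (hfC x))
  have hm : Measurable fun x => |g x - f x| := by fun_prop
  refine (abs_integral_pow_sub_le (by fun_prop) (by fun_prop) (abs_sum_le_of_bound hfC A n)
    (abs_sum_le_of_bound hgC A n) q).trans ?_
  refine mul_le_mul_of_nonneg_left ?_ (by positivity)
  have h1 : ∀ k, ∫ x in (0 : ℝ)..1, |g (n k * x) - f (n k * x)| =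
      ∫ x in (0 : ℝ)..1, |g x - f x| := fun k =>
    integral_comp_nat_mul (h := fun x => |g x - f x|) (fun x => by simp only [hfp x, hgp x])
      (intervalIntegrable_of_bounded hm hb) (hn k)
  have hi : ∀ k ∈ A, IntervalIntegrable (fun x : ℝ => |g (n k * x) - f (n k * x)|) volume 0 1 :=
    fun k _ => intervalIntegrable_of_bounded (f := fun x : ℝ => |g (n k * x) - f (n k * x)|)
      (by fun_prop) (fun x => hb (n k * x)) 0 1
  calc ∫ x in (0 : ℝ)..1, |∑ k ∈ A, f (n k * x) - ∑ k ∈ A, g (n k * x)|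
      ≤ ∫ x in (0 : ℝ)..1, ∑ k ∈ A, |g (n k * x) - f (n k * x)| := by
        refine intervalIntegral.integral_mono_on zero_le_one ?_
          (by simpa only [Finset.sum_fn] using IntervalIntegrable.sum A hi) fun x _ => ?_
        · refine intervalIntegrable_of_bounded (C := A.card * C + A.card * C) (by fun_prop)
            (fun x => ?_) _ _
          rw [abs_abs]
          exact (abs_sub _ _).trans (add_le_add (abs_sum_le_of_bound hfC A n x)
            (abs_sum_le_of_bound hgC A n x))
        · rw [abs_sub_comm, ← Finset.sum_sub_distrib]
          exact Finset.abs_sum_le_sum_abs _ _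
    _ = A.card * ∫ x in (0 : ℝ)..1, |g x - f x| := by
        rw [intervalIntegral.integral_finsetSum hi]
        simp [h1]

/-- Convergence of the moments of the sums over the good indices. For the `q`-th moment `f` is
replaced by its smoothing of degree `N ^ (2q + 2)`, whose `L¹` error is `O(N ^ (-q - 1))`. -/
lemma tendsto_moment_good {ω : ℕ → ℝ} (hω : Tendsto ω atTop atTop) {n : ℕ → ℕ}
    (hn_pos : ∀ k, 0 < n k) (hn_inj : Function.Injective n) (hA : CondA ω n) {f : ℝ → ℝ}
    (hf_meas : Measurable f) (hf_per : ∀ x, f (x + 1) = f x)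
    (hf_int : ∫ x in (0 : ℝ)..1, f x = 0) (hf_bv : BoundedVariationOn f (Set.Icc 0 1)) (q : ℕ) :
    Tendsto (fun N : ℕ => (∫ x in (0 : ℝ)..1, (∑ k ∈ goodSet n (cut N) N, f (n k * x)) ^ q) /
        √(N : ℝ) ^ q) atTop
      (𝓝 (q.factorial * gaussCoeff (∫ x in (0 : ℝ)..1, f x ^ 2) q)) := by
  obtain ⟨C, hC0, hC⟩ := exists_bound_of_bv hf_per hf_bv
  obtain ⟨V, hV0, hV⟩ := exists_integral_shift_le hf_meas hf_per hf_bv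
  obtain ⟨N₀, hA⟩ := hA
  set g : ℕ → ℝ → ℝ := fun N => smooth f (N ^ (2 * q + 2)) with hg
  have hgC : ∀ N x, |g N x| ≤ C := fun N => abs_smooth_le hf_meas hC _
  have hgt : ∀ N, IsTrigPoly (N ^ (2 * q + 2)) (g N) :=
    fun N => isTrigPoly_smooth hf_meas hf_per hC _
  have hgm : ∀ N, Measurable (g N) := fun N => (hgt N).continuous.measurable
  have herr : ∀ N : ℕ, 0 < N → ∫ x in (0 : ℝ)..1, |g N x - f x| ≤ V / N ^ (q + 1) := by
    intro N hN
    have h := integral_abs_smooth_sub_le hf_meas hf_per hC (N ^ (2 * q + 2)) hV0 hV (by positivity)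
    have h2 : √((N ^ (2 * q + 2) : ℕ) : ℝ) = (N : ℝ) ^ (q + 1) := by
      rw [Real.sqrt_eq_iff_mul_self_eq (by positivity) (by positivity)]
      push_cast
      ring
    rwa [h2] at h
  have hinv : ∀ K : ℝ, Tendsto (fun N : ℕ => K * (N : ℝ)⁻¹) atTop (𝓝 0) := fun K => by
    simpa using (tendsto_inv_atTop_zero.comp (tendsto_natCast_atTop_atTop (R := ℝ))).const_mul K
  have hseries : Tendsto (fun N : ℕ => PowerSeries.coeff q
      (momentSeries (g N) ^ (goodSet n (cut N) N).card) / √(N : ℝ) ^ q) atTop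
      (𝓝 (gaussCoeff (∫ x in (0 : ℝ)..1, f x ^ 2) q)) := by
    refine tendsto_coeff_pow (fun N => momentSeries (g N)) _ (fun N => ?_) (fun N => ?_) ?_
      (fun i => ⟨C ^ i, fun N => ?_⟩) q _ (tendsto_card_goodSet hn_inj)
    · simp only [momentSeries, PowerSeries.coeff_mk]
      simp
    · simp only [momentSeries, PowerSeries.coeff_mk, pow_one]
      simp [hg, integral_smooth hf_meas hf_per hC _ hf_int]
    · simp only [momentSeries, PowerSeries.coeff_mk]
      have h2 : Tendsto (fun N : ℕ => ∫ x in (0 : ℝ)..1, g N x ^ 2) atTop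
          (𝓝 (∫ x in (0 : ℝ)..1, f x ^ 2)) := by
        rw [tendsto_iff_norm_sub_tendsto_zero]
        refine squeeze_zero' (Eventually.of_forall fun N => norm_nonneg _) ?_ (hinv (2 * C * V))
        filter_upwards [eventually_gt_atTop 0] with N hN
        have hN1 : (1 : ℝ) ≤ N := by exact_mod_cast hN
        rw [Real.norm_eq_abs]
        refine (abs_integral_pow_sub_le (hgm N) hf_meas (hgC N) hC 2).trans ?_
        have h3 : V / (N : ℝ) ^ (q + 1) ≤ V / N :=
          div_le_div_of_nonneg_left hV0 (by linarith) (le_self_pow₀ hN1 (by omega))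
        calc ((2 : ℕ) : ℝ) * C ^ (2 - 1) * ∫ x in (0 : ℝ)..1, |g N x - f x|
            ≤ ((2 : ℕ) : ℝ) * C ^ (2 - 1) * (V / N) :=
              mul_le_mul_of_nonneg_left ((herr N hN).trans h3) (by positivity)
          _ = 2 * C * V * (N : ℝ)⁻¹ := by push_cast; ring
      simpa using h2.div_const 2
    · simp only [momentSeries, PowerSeries.coeff_mk]
      rw [abs_div, Nat.abs_cast]
      refine (div_le_self (abs_nonneg _)
        (by exact_mod_cast Nat.succ_le_of_lt (Nat.factorial_pos i))).trans ?_
      have := intervalIntegral.norm_integral_le_of_norm_le_const (a := (0 : ℝ)) (b := 1)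
        (f := fun x => g N x ^ i) (C := C ^ i) fun x _ => by
          rw [norm_pow]; exact pow_le_pow_left₀ (norm_nonneg _) (hgC N x) i
      simpa using this
  have hgood : Tendsto (fun N : ℕ =>
      (∫ x in (0 : ℝ)..1, (∑ k ∈ goodSet n (cut N) N, g N (n k * x)) ^ q) / √(N : ℝ) ^ q) atTop
      (𝓝 (q.factorial * gaussCoeff (∫ x in (0 : ℝ)..1, f x ^ 2) q)) := by
    refine (hseries.const_mul (q.factorial : ℝ)).congr' ?_
    filter_upwards [tendsto_cut.eventually_ge_atTop N₀,
      (hω.comp tendsto_cut).eventually_ge_atTop (q : ℝ),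
      eventually_le_cut_rpow hω q (2 * q + 2)] with N h1 h2 h3
    rw [integral_sum_pow hn_pos (hgt N) q _ (noRelation_goodSet hn_pos hA h1 N h2 h3) q le_rfl]
    ring
  have hdiff : Tendsto (fun N : ℕ =>
      (∫ x in (0 : ℝ)..1, (∑ k ∈ goodSet n (cut N) N, f (n k * x)) ^ q) / √(N : ℝ) ^ q -
      (∫ x in (0 : ℝ)..1, (∑ k ∈ goodSet n (cut N) N, g N (n k * x)) ^ q) / √(N : ℝ) ^ q) atTop
      (𝓝 0) := by
    refine squeeze_zero_norm' ?_ (hinv (q * C ^ (q - 1) * V))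
    filter_upwards [eventually_gt_atTop 0] with N hN
    have hN1 : (1 : ℝ) ≤ N := by exact_mod_cast hN
    have hs1 : (1 : ℝ) ≤ √N := by rw [Real.le_sqrt' one_pos]; simpa using hN1
    have hcard : ((goodSet n (cut N) N).card : ℝ) ≤ N := by
      have := card_bad_add_good n (cut N) N
      exact_mod_cast (show (goodSet n (cut N) N).card ≤ N by omega)
    rw [← sub_div, Real.norm_eq_abs, abs_div, abs_of_nonneg (a := √(N : ℝ) ^ q) (by positivity)]
    refine (div_le_self (abs_nonneg _) (one_le_pow₀ hs1)).trans ?_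
    refine (abs_integral_sum_pow_sub_le hn_pos hf_meas (hgm N) hf_per (hgt N).periodic hC (hgC N)
      _ q).trans ?_
    have hI0 : 0 ≤ ∫ x in (0 : ℝ)..1, |g N x - f x| :=
      intervalIntegral.integral_nonneg zero_le_one fun x _ => abs_nonneg _
    calc (q : ℝ) * ((goodSet n (cut N) N).card * C) ^ (q - 1) *
          ((goodSet n (cut N) N).card * ∫ x in (0 : ℝ)..1, |g N x - f x|)
        ≤ q * (N * C) ^ (q - 1) * (N * (V / N ^ (q + 1))) := by
          gcongr
          exact herr N hN
      _ = q * C ^ (q - 1) * V * (N : ℝ)⁻¹ := by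
          rcases q with _ | q
          · simp
          · simp only [Nat.add_sub_cancel]
            field_simp
            ring
  simpa using hdiff.add hgood

/-- A perturbation of `y` by at most `η ≤ 1` changes `y ^ p` by `O(η (1 + y ^ (2p)))`. The even
exponent makes the bound integrable in terms of moments, without absolute values. -/
lemma abs_pow_sub_pow_le_of_close {y z η : ℝ} (hη1 : η ≤ 1) (h : |z - y| ≤ η) (p : ℕ) :
    |z ^ p - y ^ p| ≤ η * (p * 2 ^ (2 * p - 1) * (1 + y ^ (2 * p))) := by
  refine (abs_pow_sub_pow_le _ _ _).trans ?_
  have hη0 : 0 ≤ η := (abs_nonneg _).trans h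
  have hz : |z| ≤ 1 + |y| := by
    have := abs_sub_abs_le_abs_sub z y
    linarith
  have h1 : max |z| |y| ^ (p - 1) ≤ (1 + |y|) ^ (2 * p) := by
    refine (pow_le_pow_left₀ (le_max_of_le_left (abs_nonneg _))
      (max_le hz (by linarith)) _).trans ?_
    exact pow_le_pow_right₀ (by linarith [abs_nonneg y]) (by omega)
  have h2 : (1 + |y|) ^ (2 * p) ≤ 2 ^ (2 * p - 1) * (1 + y ^ (2 * p)) := by
    have := add_pow_le zero_le_one (abs_nonneg y) (2 * p)
    rwa [one_pow, pow_mul |y|, sq_abs, ← pow_mul] at this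
  calc |z - y| * p * max |z| |y| ^ (p - 1)
      ≤ η * p * (2 ^ (2 * p - 1) * (1 + y ^ (2 * p))) := by
        gcongr
        exact h1.trans h2
    _ = _ := by ring

/-- Under Condition `A_ω`, with `‖f‖ > 0` and `S_N(x) = ∑_{k<N} f(n_k x)`, the `p`-th moment
`∫₀¹ (S_N/(‖f‖√N))^p dx` converges, as `N → ∞`, to the `p`-th moment of the standard normal
law: `p!/((p/2)! 2^{p/2})` for even `p` and `0` for odd `p`. -/
theorem statement12
    (ω : ℕ → ℝ) (hω_pos : ∀ k, 0 < ω k) (hω_mono : Monotone ω)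
    (hω_top : Tendsto ω atTop atTop)
    (n : ℕ → ℕ) (hn_pos : ∀ k, 0 < n k) (hn_inj : Function.Injective n)
    (hA : CondA ω n)
    (f : ℝ → ℝ) (hf_meas : Measurable f)
    (hf_per : ∀ x, f (x + 1) = f x)
    (hf_int : ∫ x in (0:ℝ)..1, f x = 0)
    (hf_bv : BoundedVariationOn f (Set.Icc 0 1))
    (hf_norm : 0 < ∫ x in (0:ℝ)..1, f x ^ 2) :
    ∀ p : ℕ, 1 ≤ p →
      Tendsto (fun N : ℕ =>
          ∫ x in (0:ℝ)..1,
            ((∑ k ∈ Finset.range N, f (n k * x)) /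
              (Real.sqrt (∫ x in (0:ℝ)..1, f x ^ 2) * Real.sqrt N)) ^ p)
        atTop
        (𝓝 (if Even p then (p.factorial : ℝ) / ((p / 2).factorial * 2 ^ (p / 2)) else 0)) := by
  intro p _
  obtain ⟨C, hC0, hC⟩ := exists_bound_of_bv hf_per hf_bv
  set s : ℝ := ∫ x in (0:ℝ)..1, f x ^ 2 with hs
  have hgood := tendsto_moment_good hω_top hn_pos hn_inj hA hf_meas hf_per hf_int hf_bv
  -- The rescaled full sum `Z`, and its part `Y` over the good indices.
  set Z : ℕ → ℝ → ℝ := fun N x => (∑ k ∈ Finset.range N, f (n k * x)) / √(N : ℝ) with hZ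
  set Y : ℕ → ℝ → ℝ := fun N x => (∑ k ∈ goodSet n (cut N) N, f (n k * x)) / √(N : ℝ) with hY
  have hYmom : ∀ q, Tendsto (fun N => ∫ x in (0:ℝ)..1, Y N x ^ q) atTop
      (𝓝 (q.factorial * gaussCoeff s q)) := by
    intro q
    refine (hgood q).congr fun N => ?_
    simp only [hY, div_pow, intervalIntegral.integral_div]
  have hbd : ∀ (A : Finset ℕ) (N q : ℕ), IntervalIntegrable
      (fun x : ℝ => ((∑ k ∈ A, f (n k * x)) / √(N : ℝ)) ^ q) volume 0 1 := by
    intro A N q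
    refine intervalIntegrable_of_bounded (C := (A.card * C / √(N : ℝ)) ^ q) (by fun_prop)
      (fun x => ?_) _ _
    rw [abs_pow, abs_div, abs_of_nonneg (Real.sqrt_nonneg _)]
    have := abs_sum_le_of_bound hC A n x
    gcongr
  have hη : Tendsto (fun N : ℕ => C * ((cut N : ℝ) / √(N : ℝ))) atTop (𝓝 0) := by
    simpa using tendsto_cut_div_sqrt.const_mul C
  have hclose : ∀ N x, |Z N x - Y N x| ≤ C * ((cut N : ℝ) / √(N : ℝ)) := by
    intro N x
    have h1 : Z N x - Y N x = (∑ k ∈ badSet n (cut N) N, f (n k * x)) / √(N : ℝ) := by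
      simp only [hZ, hY]
      rw [← sum_bad_add_good n (cut N) N (fun k => f (n k * x))]
      ring
    rw [h1, abs_div, abs_of_nonneg (Real.sqrt_nonneg _), ← mul_div_assoc]
    refine div_le_div_of_nonneg_right ?_ (Real.sqrt_nonneg _)
    refine (abs_sum_le_of_bound hC _ n x).trans ?_
    rw [mul_comm]
    refine mul_le_mul_of_nonneg_left ?_ hC0.le
    exact_mod_cast card_badSet_le hn_inj (cut N) N
  have hdiff : Tendsto (fun N => (∫ x in (0:ℝ)..1, Z N x ^ p) - ∫ x in (0:ℝ)..1, Y N x ^ p)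
      atTop (𝓝 0) := by
    have hz : Tendsto (fun N : ℕ => C * ((cut N : ℝ) / √(N : ℝ)) *
        (p * 2 ^ (2 * p - 1) * (1 + ∫ x in (0:ℝ)..1, Y N x ^ (2 * p)))) atTop (𝓝 0) := by
      simpa using hη.mul (((hYmom (2 * p)).const_add 1).const_mul ((p : ℝ) * 2 ^ (2 * p - 1)))
    refine squeeze_zero_norm' ?_ hz
    filter_upwards [hη.eventually_le_const one_pos] with N hN
    rw [← intervalIntegral.integral_sub (hbd _ N p) (hbd _ N p), Real.norm_eq_abs]
    refine (intervalIntegral.abs_integral_le_integral_abs zero_le_one).trans ?_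
    have hintg : IntervalIntegrable (fun x => 1 + Y N x ^ (2 * p)) volume 0 1 :=
      intervalIntegrable_const.add (hbd _ N (2 * p))
    have hle := intervalIntegral.integral_mono_on zero_le_one
      ((hbd (Finset.range N) N p).sub (hbd (goodSet n (cut N) N) N p)).abs
      ((hintg.const_mul ((p : ℝ) * 2 ^ (2 * p - 1))).const_mul (C * ((cut N : ℝ) / √(N : ℝ))))
      fun x _ => abs_pow_sub_pow_le_of_close hN (hclose N x) p
    refine hle.trans_eq ?_
    rw [intervalIntegral.integral_const_mul, intervalIntegral.integral_const_mul,
      intervalIntegral.integral_add intervalIntegrable_const (hbd _ N (2 * p))]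
    simp [hY]
  have hZmom : Tendsto (fun N => ∫ x in (0:ℝ)..1, Z N x ^ p) atTop
      (𝓝 (p.factorial * gaussCoeff s p)) := by
    simpa using hdiff.add (hYmom p)
  have hfinal := hZmom.div_const (√s ^ p)
  have hlim : (p.factorial : ℝ) * gaussCoeff s p / √s ^ p =
      if Even p then (p.factorial : ℝ) / ((p / 2).factorial * 2 ^ (p / 2)) else 0 := by
    unfold gaussCoeff
    split_ifs with h
    · have h2 : √s ^ p = s ^ (p / 2) := by
        conv_lhs => rw [← Nat.two_mul_div_two_of_even h, pow_mul, Real.sq_sqrt hf_norm.le]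
      rw [h2]
      have : s ^ (p / 2) ≠ 0 := pow_ne_zero _ hf_norm.ne'
      field_simp
    · simp
  rw [hlim] at hfinal
  refine hfinal.congr fun N => ?_
  rw [← intervalIntegral.integral_div]
  refine intervalIntegral.integral_congr fun x _ => ?_
  simp only [hZ]
  rw [← div_pow, div_div, mul_comm √s]
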